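/- Let r ≥ 1 and let A₀, A₁, …, A_r, B₃, …, Bₙ be positive semidefinite complex Hermitian n × n matrices. Set d_{ij} = D(Aᵢ, Aⱼ, B₃, …, Bₙ) for 0 ≤ i, j ≤ r. Then det((d_{0i}d_{0j} − d_{00}d_{ij})_{1 ≤ i,j ≤ r}) ≥ 0 and (−1)^r det((d_{ij})_{0 ≤ i,j ≤ r}) ≥ 0. -/

import Mathlib

open scoped ComplexOrder

/-- The mixed discriminant of `n` complex `n × n` matrices. -/
noncomputable def mixedDisc {n : ℕ} (A : Fin n → Matrix (Fin n) (Fin n) ℂ) : ℂ :=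
  (n.factorial : ℂ)⁻¹ * ∑ σ : Equiv.Perm (Fin n), (Matrix.of fun i j => A (σ j) i j).det

open Matrix Polynomial

/-- The mixed discriminant as a multilinear map. -/
noncomputable def mixedDiscMultilinear (n : ℕ) :
    MultilinearMap ℂ (fun _ : Fin n => Matrix (Fin n) (Fin n) ℂ) ℂ :=
  (n.factorial : ℂ)⁻¹ • ∑ σ : Equiv.Perm (Fin n),
    ((detRowAlternating (n := Fin n) (R := ℂ)).toMultilinearMap.compLinearMap fun j =>
      (LinearMap.proj j).comp (transposeLinearEquiv (Fin n) (Fin n) ℂ ℂ).toLinearMap).domDomCongr σ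

theorem mixedDiscMultilinear_apply {n : ℕ} (A : Fin n → Matrix (Fin n) (Fin n) ℂ) :
    mixedDiscMultilinear n A = mixedDisc A := by
  simp only [mixedDiscMultilinear, mixedDisc, _root_.smul_apply, _root_.sum_apply,
    smul_eq_mul]
  refine congrArg _ (Finset.sum_congr rfl fun σ _ => ?_)
  rw [← det_transpose]
  rfl

theorem mixedDisc_comp_perm {n : ℕ} (A : Fin n → Matrix (Fin n) (Fin n) ℂ)
    (τ : Equiv.Perm (Fin n)) : mixedDisc (A ∘ τ) = mixedDisc A := by
  unfold mixedDisc
  exact congrArg _ (Fintype.sum_equiv (Equiv.mulLeft τ) _ _ fun σ => rfl)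

theorem mixedDisc_const {n : ℕ} (A : Matrix (Fin n) (Fin n) ℂ) :
    mixedDisc (fun _ => A) = A.det := by
  have : (n.factorial : ℂ) ≠ 0 := Nat.cast_ne_zero.mpr n.factorial_ne_zero
  have h : (of fun i j => A i j) = A := rfl
  simp [mixedDisc, h, Fintype.card_perm, this]

theorem continuous_mixedDisc (n : ℕ) :
    Continuous (mixedDisc : (Fin n → Matrix (Fin n) (Fin n) ℂ) → ℂ) := by
  unfold mixedDisc
  refine continuous_const.mul (continuous_finsetSum _ fun σ _ => Continuous.matrix_det ?_)
  refine continuous_matrix fun i j => ?_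
  simp only [of_apply]
  exact (continuous_apply (σ j)).matrix_elem i j

theorem star_mixedDisc {n : ℕ} {A : Fin n → Matrix (Fin n) (Fin n) ℂ}
    (hA : ∀ i, (A i).IsHermitian) : star (mixedDisc A) = mixedDisc A := by
  have key (σ : Equiv.Perm (Fin n)) : star (of fun i j => A (σ j) i j).det =
      ∑ τ : Equiv.Perm (Fin n), (Equiv.Perm.sign τ : ℂ) * ∏ i, A (σ (τ i)) (τ i) i := by
    rw [← det_conjTranspose, det_apply']
    refine Finset.sum_congr rfl fun τ _ => congrArg _ (Finset.prod_congr rfl fun i _ => ?_)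
    exact (hA _).apply _ _
  rw [mixedDisc, star_mul', star_sum, Finset.sum_congr rfl fun σ _ => key σ, star_inv₀,
    star_natCast, Finset.sum_comm]
  simp only [det_apply', of_apply]
  conv_rhs => rw [Finset.sum_comm]
  refine congrArg _ (Finset.sum_congr rfl fun τ _ => ?_)
  exact Fintype.sum_equiv (Equiv.mulRight τ) _ _ fun σ => rfl

theorem det_add_I_smul_ne_zero {n : ℕ} {X Y : Matrix (Fin n) (Fin n) ℂ} (hX : X.IsHermitian)
    (hY : Y.PosDef) : (X + Complex.I • Y).det ≠ 0 := by
  intro h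
  obtain ⟨v, hv, hv0⟩ := exists_mulVec_eq_zero_iff.mpr h
  have h1 := congrArg Complex.im (congrArg (star v ⬝ᵥ ·) hv0)
  have hx := hX.im_star_dotProduct_mulVec_self v
  have hy := (Complex.pos_iff.mp (hY.dotProduct_mulVec_pos hv)).1
  simp only [add_mulVec, smul_mulVec, dotProduct_add, dotProduct_smul, Complex.add_im,
    smul_eq_mul, Complex.I_mul_im, dotProduct_zero, Complex.zero_im] at h1
  simp only [RCLike.im_to_complex] at hx
  linarith

/-- The restriction of a multilinear map to the affine line `u + z • v`, as a polynomial in `z`. -/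
noncomputable def MultilinearMap.linePolynomial {ι M : Type*} [Fintype ι] [DecidableEq ι]
    [AddCommGroup M] [Module ℂ M] (f : MultilinearMap ℂ (fun _ : ι => M) ℂ) (u v : ι → M) : ℂ[X] :=
  ∑ T : Finset ι, C (f (T.piecewise v u)) * X ^ T.card

namespace MultilinearMap

variable {ι M : Type*} [Fintype ι] [DecidableEq ι] [AddCommGroup M] [Module ℂ M]
  (f : MultilinearMap ℂ (fun _ : ι => M) ℂ) (u v : ι → M)

theorem eval_linePolynomial (z : ℂ) : (f.linePolynomial u v).eval z = f (u + z • v) := by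
  rw [add_comm, map_add_univ, linePolynomial, eval_finsetSum]
  refine Finset.sum_congr rfl fun T _ => ?_
  have : T.piecewise (z • v) u =
      T.piecewise (fun i => z • T.piecewise v u i) (T.piecewise v u) := by
    ext i
    by_cases h : i ∈ T <;> simp [h]
  rw [this, map_piecewise_smul]
  rw [Finset.prod_const, eval_mul, eval_C, eval_X_pow, smul_eq_mul, mul_comm]

theorem coeff_linePolynomial (k : ℕ) :
    (f.linePolynomial u v).coeff k =
      ∑ T ∈ Finset.powersetCard k Finset.univ, f (T.piecewise v u) := by
  simp only [linePolynomial, finsetSum_coeff, coeff_C_mul, coeff_X_pow, mul_ite, mul_one, mul_zero]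
  rw [← Finset.sum_filter]
  refine Finset.sum_congr ?_ fun _ _ => rfl
  ext T
  simp [Finset.mem_powersetCard, eq_comm]

theorem coeff_one_linePolynomial :
    (f.linePolynomial u v).coeff 1 = ∑ i, f (Function.update u i (v i)) := by
  rw [coeff_linePolynomial, Finset.powersetCard_one, Finset.sum_map]
  simp [Finset.piecewise_singleton]

end MultilinearMap

theorem mixedDisc_update_piecewise {n : ℕ} (B : Fin n → Matrix (Fin n) (Fin n) ℂ)
    (Z : Matrix (Fin n) (Fin n) ℂ) {S : Finset (Fin n)} {a j : Fin n} (ha : a ∉ S) (hj : j ∉ S) :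
    mixedDisc (Function.update (S.piecewise B fun _ => Z) j (B a)) =
      mixedDisc ((insert a S).piecewise B fun _ => Z) := by
  rw [← mixedDisc_comp_perm _ (Equiv.swap a j), Finset.piecewise_insert]
  congr 1
  funext i
  simp only [Function.comp_apply]
  by_cases hia : i = a
  · subst hia; simp
  · by_cases hij : i = j
    · subst hij
      have : a ≠ i := Ne.symm hia
      simp [hia, this, ha, hj]
    · rw [Equiv.swap_apply_of_ne_of_ne hia hij]
      simp [hia, hij]

/-- Half-plane stability of mixed discriminants. -/
theorem mixedDisc_piecewise_ne_zero {n : ℕ} {B : Fin n → Matrix (Fin n) (Fin n) ℂ}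
    (hB : ∀ i, (B i).PosDef) (S : Finset (Fin n)) :
    ∀ {X Y : Matrix (Fin n) (Fin n) ℂ}, X.IsHermitian → Y.PosDef →
      mixedDisc (S.piecewise B fun _ => X + Complex.I • Y) ≠ 0 := by
  induction S using Finset.induction_on with
  | empty =>
    intro X Y hX hY
    simpa [mixedDisc_const] using det_add_I_smul_ne_zero hX hY
  | insert a S ha ih =>
    intro X Y hX hY
    set Z := X + Complex.I • Y with hZ
    set f := mixedDiscMultilinear n
    set v : Fin n → Matrix (Fin n) (Fin n) ℂ := S.piecewise 0 fun _ => B a with hv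
    set p := f.linePolynomial (S.piecewise B fun _ => Z) v with hp
    have eval_p (z : ℂ) : p.eval z = mixedDisc (S.piecewise B fun _ => Z + z • B a) := by
      rw [hp, MultilinearMap.eval_linePolynomial, mixedDiscMultilinear_apply]
      congr 1
      funext i
      by_cases h : i ∈ S <;> simp [hv, h]
    have root_p (z : ℂ) (hz : p.eval z = 0) : z.im < 0 := by
      by_contra! him
      rw [eval_p] at hz
      have hX' : (X + (z.re : ℂ) • B a).IsHermitian := by
        refine hX.add ?_
        rw [IsHermitian, conjTranspose_smul, (hB a).isHermitian.eq]
        simp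
      have hY' : (Y + (z.im : ℂ) • B a).PosDef :=
        hY.add_posSemidef ((hB a).posSemidef.smul (by exact_mod_cast him))
      refine ih hX' hY' ?_
      convert hz using 4
      rw [hZ]
      nth_rewrite 3 [← Complex.re_add_im z]
      module
    have coeff_top : p.coeff Sᶜ.card ≠ 0 := by
      have hne := ih (X := 0) isHermitian_zero (hB a)
      rw [hp, MultilinearMap.coeff_linePolynomial, Finset.sum_eq_single Sᶜ]
      · have hB' := f.map_piecewise_smul (fun _ => Complex.I) (S.piecewise B fun _ => B a) Sᶜ
        intro h0
        have e1 : Sᶜ.piecewise v (S.piecewise B fun _ => Z) = S.piecewise B fun _ => B a := by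
          funext i
          by_cases h : i ∈ S <;> simp [hv, h]
        have e2 : Sᶜ.piecewise (fun i => Complex.I • S.piecewise B (fun _ => B a) i)
            (S.piecewise B fun _ => B a) = S.piecewise B fun _ => 0 + Complex.I • B a := by
          funext i
          by_cases h : i ∈ S <;> simp [h]
        rw [e1] at h0
        rw [e2, h0, smul_zero, mixedDiscMultilinear_apply] at hB'
        exact hne hB'
      · intro T hT hTS
        have hT' := (Finset.mem_powersetCard.mp hT).2
        have : ¬ T ⊆ Sᶜ := fun h => hTS (Finset.eq_of_subset_of_card_le h hT'.ge)
        obtain ⟨j, hjT, hjS⟩ := Finset.not_subset.mp this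
        have hjS' : j ∈ S := by simpa using hjS
        exact f.map_coord_zero j (by simp [hjT, hv, hjS'])
      · intro h
        simp [Finset.mem_powersetCard] at h
    have hcard : 1 ≤ Sᶜ.card := Finset.card_pos.mpr ⟨a, by simpa using ha⟩
    have hderiv : derivative p ≠ 0 := by
      intro h
      have h1 := coeff_derivative p (Sᶜ.card - 1)
      rw [h, coeff_zero, Nat.sub_add_cancel hcard] at h1
      have h2 : ((Sᶜ.card - 1 : ℕ) : ℂ) + 1 ≠ 0 := Nat.cast_add_one_ne_zero _
      exact mul_ne_zero coeff_top h2 h1.symm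
    have hdeg : 0 < p.degree :=
      natDegree_pos_iff_degree_pos.mp (hcard.trans (le_natDegree_of_ne_zero coeff_top))
    have hcoeff : p.coeff 1 ≠ 0 := by
      intro h
      have hroot : (0 : ℂ) ∈ (derivative p).rootSet ℂ := by
        rw [mem_rootSet]
        refine ⟨hderiv, ?_⟩
        rw [coe_aeval_eq_eval, ← coeff_zero_eq_eval_zero, coeff_derivative, zero_add, h, zero_mul]
      have hsub : convexHull ℝ (p.rootSet ℂ) ⊆ {z : ℂ | z.im < 0} := by
        refine convexHull_min (fun z hz => root_p z ?_) (convex_halfSpace_im_lt 0)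
        simpa using (mem_rootSet.mp hz).2
      have := hsub (rootSet_derivative_subset_convexHull_rootSet hdeg hroot)
      simp at this
    intro h0
    refine hcoeff ?_
    rw [hp, MultilinearMap.coeff_one_linePolynomial]
    refine Finset.sum_eq_zero fun j _ => ?_
    by_cases hj : j ∈ S
    · exact f.map_coord_zero j (by simp [hv, hj])
    · have : v j = B a := by simp [hv, hj]
      rw [this, mixedDiscMultilinear_apply, mixedDisc_update_piecewise B Z ha hj, h0]

theorem mixedDisc_re_pos {n : ℕ} {B : Fin n → Matrix (Fin n) (Fin n) ℂ}
    (hB : ∀ i, (B i).PosDef) : 0 < (mixedDisc B).re := by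
  set L : ℝ → Fin n → Matrix (Fin n) (Fin n) ℂ :=
    fun t i => ((1 - t : ℝ) : ℂ) • 1 + ((t : ℝ) : ℂ) • B i with hL
  have hLc : Continuous fun t => (mixedDisc (L t)).re := by
    refine Complex.continuous_re.comp ((continuous_mixedDisc n).comp ?_)
    fun_prop
  have hLpos (t : ℝ) (ht : t ∈ Set.Icc (0 : ℝ) 1) (i : Fin n) : (L t i).PosDef := by
    rcases ht.1.eq_or_lt with h0 | h0
    · simpa [hL, ← h0] using PosDef.one
    · exact PosDef.posSemidef_add (PosSemidef.one.smul (by exact_mod_cast sub_nonneg.mpr ht.2))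
        ((hB i).smul (by exact_mod_cast h0))
  have hne (t : ℝ) (ht : t ∈ Set.Icc (0 : ℝ) 1) : (mixedDisc (L t)).re ≠ 0 := by
    intro h
    have h1 := mixedDisc_piecewise_ne_zero (hLpos t ht) Finset.univ isHermitian_zero PosDef.one
    rw [Finset.piecewise_univ] at h1
    exact h1 (Complex.ext h (Complex.conj_eq_iff_im.mp
      (star_mixedDisc fun i => (hLpos t ht i).isHermitian)))
  have h0 : (mixedDisc (L 0)).re = 1 := by
    have : L 0 = fun _ => 1 := by simp [hL]
    simp [this, mixedDisc_const]
  have h1 : L 1 = B := by simp [hL]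
  by_contra! hneg
  obtain ⟨t, ht, h⟩ := intermediate_value_Icc' zero_le_one hLc.continuousOn
    (show (0 : ℝ) ∈ Set.Icc _ _ from ⟨by rwa [h1], by rw [h0]; exact zero_le_one⟩)
  exact hne t ht h

/-- The real bilinear form obtained from the mixed discriminant by fixing all but two entries. -/
noncomputable def mixedDiscBilin {n : ℕ} (B : Fin n → Matrix (Fin (n + 2)) (Fin (n + 2)) ℂ) :
    LinearMap.BilinForm ℝ (Matrix (Fin (n + 2)) (Fin (n + 2)) ℂ) :=
  LinearMap.mk₂ ℝ (fun X Y => (mixedDisc (Fin.cons X (Fin.cons Y B))).re)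
    (fun X X' Y => by
      simp only [← mixedDiscMultilinear_apply]
      rw [MultilinearMap.cons_add, Complex.add_re])
    (fun c X Y => by
      simp only [← mixedDiscMultilinear_apply]
      rw [← Complex.coe_smul, MultilinearMap.cons_smul]
      simp)
    (fun X Y Y' => by
      simp only [← mixedDiscMultilinear_apply, ← MultilinearMap.curryLeft_apply]
      rw [map_add, _root_.add_apply, Complex.add_re])
    (fun c X Y => by
      simp only [← mixedDiscMultilinear_apply, ← MultilinearMap.curryLeft_apply]
      rw [← Complex.coe_smul, map_smul, _root_.smul_apply]
      simp)

theorem mixedDiscBilin_apply {n : ℕ} (B : Fin n → Matrix (Fin (n + 2)) (Fin (n + 2)) ℂ)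
    (X Y : Matrix (Fin (n + 2)) (Fin (n + 2)) ℂ) :
    mixedDiscBilin B X Y = (mixedDisc (Fin.cons X (Fin.cons Y B))).re := rfl

theorem mixedDiscBilin_comm {n : ℕ} (B : Fin n → Matrix (Fin (n + 2)) (Fin (n + 2)) ℂ)
    (X Y : Matrix (Fin (n + 2)) (Fin (n + 2)) ℂ) :
    mixedDiscBilin B X Y = mixedDiscBilin B Y X := by
  rw [mixedDiscBilin_apply, mixedDiscBilin_apply, ← mixedDisc_comp_perm _ (Equiv.swap 0 1)]
  congr 2
  funext i
  refine Fin.cases ?_ (Fin.cases ?_ fun i => ?_) i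
  · simp
  · rw [Fin.succ_zero_eq_one]
    simp
  · rw [Function.comp_apply, Equiv.swap_apply_of_ne_of_ne (by simp) (by simp [Fin.ext_iff])]
    rfl

theorem isHermitian_cons_cons {n m : ℕ} {X Y : Matrix (Fin m) (Fin m) ℂ}
    {B : Fin n → Matrix (Fin m) (Fin m) ℂ} (hX : X.IsHermitian) (hY : Y.IsHermitian)
    (hB : ∀ i, (B i).IsHermitian) (i : Fin (n + 2)) :
    (Fin.cons X (Fin.cons Y B : Fin (n + 1) → Matrix (Fin m) (Fin m) ℂ) :
      Fin (n + 2) → Matrix (Fin m) (Fin m) ℂ) i |>.IsHermitian :=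
  Fin.cases hX (Fin.cases hY hB) i

theorem mixedDisc_cons_cons_eq {n : ℕ} {B : Fin n → Matrix (Fin (n + 2)) (Fin (n + 2)) ℂ}
    (hB : ∀ i, (B i).IsHermitian) {X Y : Matrix (Fin (n + 2)) (Fin (n + 2)) ℂ}
    (hX : X.IsHermitian) (hY : Y.IsHermitian) :
    mixedDisc (Fin.cons X (Fin.cons Y B)) = (mixedDiscBilin B X Y : ℂ) :=
  (Complex.conj_eq_iff_re.mp (star_mixedDisc (isHermitian_cons_cons hX hY hB))).symm

theorem mixedDisc_line {n : ℕ} {B : Fin n → Matrix (Fin (n + 2)) (Fin (n + 2)) ℂ}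
    (hB : ∀ i, (B i).IsHermitian) {X A : Matrix (Fin (n + 2)) (Fin (n + 2)) ℂ}
    (hX : X.IsHermitian) (hA : A.IsHermitian) (z : ℂ) :
    mixedDisc (Fin.cons (X + z • A) (Fin.cons (X + z • A) B)) =
      mixedDiscBilin B X X + 2 * z * mixedDiscBilin B A X + z ^ 2 * mixedDiscBilin B A A := by
  have h : mixedDisc (Fin.cons (X + z • A) (Fin.cons (X + z • A) B)) =
      mixedDisc (Fin.cons X (Fin.cons X B)) + z * mixedDisc (Fin.cons X (Fin.cons A B)) +
      z * (mixedDisc (Fin.cons A (Fin.cons X B)) + z * mixedDisc (Fin.cons A (Fin.cons A B))) := by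
    simp only [← mixedDiscMultilinear_apply]
    rw [MultilinearMap.cons_add, MultilinearMap.cons_smul]
    simp only [← MultilinearMap.curryLeft_apply]
    simp only [map_add, map_smul, _root_.add_apply, _root_.smul_apply, smul_eq_mul]
  rw [h, mixedDisc_cons_cons_eq hB hX hX, mixedDisc_cons_cons_eq hB hX hA,
    mixedDisc_cons_cons_eq hB hA hX, mixedDisc_cons_cons_eq hB hA hA, mixedDiscBilin_comm B X A]
  ring

theorem mixedDiscBilin_self_pos {n : ℕ} {B : Fin n → Matrix (Fin (n + 2)) (Fin (n + 2)) ℂ}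
    (hB : ∀ i, (B i).PosDef) {A : Matrix (Fin (n + 2)) (Fin (n + 2)) ℂ} (hA : A.PosDef) :
    0 < mixedDiscBilin B A A :=
  mixedDisc_re_pos (Fin.cases hA (Fin.cases hA hB))

/-- The Alexandrov–Fenchel inequality for mixed discriminants, with positive definite entries
except for one arbitrary Hermitian matrix. -/
theorem mixedDiscBilin_alexandrov_fenchel {n : ℕ}
    {B : Fin n → Matrix (Fin (n + 2)) (Fin (n + 2)) ℂ} (hB : ∀ i, (B i).PosDef)
    {A X : Matrix (Fin (n + 2)) (Fin (n + 2)) ℂ} (hA : A.PosDef) (hX : X.IsHermitian) :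
    mixedDiscBilin B A A * mixedDiscBilin B X X ≤ mixedDiscBilin B A X ^ 2 := by
  by_contra! hlt
  set a := mixedDiscBilin B A A
  set b := mixedDiscBilin B A X
  set c := mixedDiscBilin B X X
  have ha : 0 < a := mixedDiscBilin_self_pos hB hA
  have hs : 0 < √(a * c - b ^ 2) := Real.sqrt_pos.mpr (sub_pos.mpr hlt)
  have hs2 : √(a * c - b ^ 2) ^ 2 = a * c - b ^ 2 := Real.sq_sqrt (sub_pos.mpr hlt).le
  set s := √(a * c - b ^ 2)
  have hline := mixedDisc_line (fun i => (hB i).isHermitian) hX hA.isHermitian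
    (((-b / a : ℝ) : ℂ) + Complex.I * ((s / a : ℝ) : ℂ))
  have hroot : (c : ℂ) + 2 * (((-b / a : ℝ) : ℂ) + Complex.I * ((s / a : ℝ) : ℂ)) * b +
      (((-b / a : ℝ) : ℂ) + Complex.I * ((s / a : ℝ) : ℂ)) ^ 2 * a = 0 := by
    have ha' : (a : ℂ) ≠ 0 := by exact_mod_cast ha.ne'
    have hs2' : (s : ℂ) ^ 2 = a * c - b ^ 2 := by exact_mod_cast hs2
    push_cast
    field_simp
    linear_combination (s : ℂ) ^ 2 * Complex.I_sq - hs2'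
  rw [hroot] at hline
  have hXA : (X + ((-b / a : ℝ) : ℂ) • A).IsHermitian := by
    refine hX.add ?_
    rw [IsHermitian, conjTranspose_smul, hA.isHermitian.eq]
    simp
  have hsA : (((s / a : ℝ) : ℂ) • A).PosDef := hA.smul (by exact_mod_cast div_pos hs ha)
  refine mixedDisc_piecewise_ne_zero (B := Fin.cons A (Fin.cons A B))
    (Fin.cases hA (Fin.cases hA hB)) {0, 1}ᶜ hXA hsA ?_
  rw [← hline]
  congr 1
  funext i
  refine Fin.cases ?_ (Fin.cases ?_ fun i => ?_) i
  · simp [add_smul, mul_smul, add_assoc]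
  · simp [add_smul, mul_smul, add_assoc]
  · simp [Finset.piecewise, Fin.ext_iff]

theorem det_bordered {r : ℕ} (d : Matrix (Fin (r + 1)) (Fin (r + 1)) ℝ) (hd : d 0 0 ≠ 0) :
    (-1) ^ r * d.det = d 0 0 * (d 0 0)⁻¹ ^ r *
      (of fun i j : Fin r => d i.succ 0 * d 0 j.succ - d 0 0 * d i.succ j.succ).det := by
  set c : Fin (r + 1) → ℝ := Fin.cons 0 fun i => d i.succ 0 / d 0 0 with hc
  set e : Matrix (Fin (r + 1)) (Fin (r + 1)) ℝ := of fun i j => d i j - c i * d 0 j with he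
  have hde : d.det = e.det :=
    det_eq_of_forall_row_eq_smul_add_const c 0 rfl fun i j => by simp [he, hc]
  have hsub : e.submatrix Fin.succ Fin.succ = (-(d 0 0)⁻¹) •
      of fun i j : Fin r => d i.succ 0 * d 0 j.succ - d 0 0 * d i.succ j.succ := by
    ext i j
    simp only [he, hc, submatrix_apply, of_apply, Fin.cons_succ, Matrix.smul_apply, smul_eq_mul]
    field_simp
    ring
  rw [hde, det_succ_column_zero, Fin.sum_univ_succ, Finset.sum_eq_zero]
  · have h00 : e 0 0 = d 0 0 := by simp [he, hc]
    rw [show Fin.succAbove (0 : Fin (r + 1)) = Fin.succ from funext Fin.zero_succAbove,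
      hsub, det_smul, h00, Fintype.card_fin, neg_pow]
    have : ((-1 : ℝ) ^ r) * (-1) ^ r = 1 := by rw [← mul_pow]; simp
    simp only [Fin.val_zero, pow_zero, one_mul, add_zero]
    linear_combination (d 0 0 * (d 0 0)⁻¹ ^ r *
      (of fun i j : Fin r => d i.succ 0 * d 0 j.succ - d 0 0 * d i.succ j.succ).det) * this
  · intro i _
    have : e i.succ 0 = 0 := by simp [he, hc, hd]
    simp [this]

theorem af_det_nonneg_of_posDef {n r : ℕ}
    {A : Fin (r + 1) → Matrix (Fin (n + 2)) (Fin (n + 2)) ℂ}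
    {B : Fin n → Matrix (Fin (n + 2)) (Fin (n + 2)) ℂ}
    (hA : ∀ i, (A i).PosDef) (hB : ∀ i, (B i).PosDef) :
    0 ≤ (of fun i j : Fin r =>
        mixedDiscBilin B (A 0) (A i.succ) * mixedDiscBilin B (A 0) (A j.succ) -
        mixedDiscBilin B (A 0) (A 0) * mixedDiscBilin B (A i.succ) (A j.succ)).det ∧
      0 ≤ (-1 : ℝ) ^ r * (of fun i j => mixedDiscBilin B (A i) (A j)).det := by
  have h00 := mixedDiscBilin_self_pos hB (hA 0)
  have hpsd : (of fun i j : Fin r =>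
      mixedDiscBilin B (A 0) (A i.succ) * mixedDiscBilin B (A 0) (A j.succ) -
        mixedDiscBilin B (A 0) (A 0) * mixedDiscBilin B (A i.succ) (A j.succ)).PosSemidef := by
    refine PosSemidef.of_dotProduct_mulVec_nonneg ?_ fun x => ?_
    · ext i j
      simp only [conjTranspose_apply, of_apply, star_trivial]
      rw [mixedDiscBilin_comm B (A j.succ), mul_comm (mixedDiscBilin B (A 0) (A j.succ))]
    · have hX : (∑ i, x i • A i.succ).IsHermitian := by
        refine isSelfAdjoint_sum _ fun i _ => ?_
        exact IsSelfAdjoint.smul (IsSelfAdjoint.all _) (hA i.succ).isHermitian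
      have haf := mixedDiscBilin_alexandrov_fenchel hB (hA 0) hX
      rw [← sub_nonneg] at haf
      refine haf.trans_eq (Eq.symm ?_)
      simp only [dotProduct, mulVec, of_apply, map_sum, map_smul, LinearMap.sum_apply,
        LinearMap.smul_apply, smul_eq_mul, Pi.star_apply, star_trivial, sq, Finset.sum_mul_sum]
      simp only [Finset.mul_sum, ← Finset.sum_sub_distrib]
      refine Finset.sum_congr rfl fun i _ => Finset.sum_congr rfl fun j _ => ?_
      rw [mixedDiscBilin_comm B (A j.succ)]
      ring
  refine ⟨hpsd.det_nonneg, ?_⟩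
  rw [det_bordered _ (by simpa using h00.ne')]
  refine mul_nonneg (mul_nonneg h00.le (pow_nonneg (inv_nonneg.mpr h00.le) r)) ?_
  simpa only [of_apply, fun i => mixedDiscBilin_comm B (A (Fin.succ i)) (A 0)] using hpsd.det_nonneg

/-- determinantal generalization of the Alexandrov–Fenchel inequality for
mixed discriminants: with `dᵢⱼ = D(Aᵢ, Aⱼ, B₃, …, Bₙ)` of positive semidefinite Hermitian
matrices, `det((d₀ᵢd₀ⱼ − d₀₀dᵢⱼ)₁≤i,j≤r) ≥ 0` and `(−1)^r det((dᵢⱼ)₀≤i,j≤r) ≥ 0`. -/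
theorem af_mixedDisc_determinantal (n r : ℕ) (hr : 1 ≤ r)
    (A : Fin (r + 1) → Matrix (Fin (n + 2)) (Fin (n + 2)) ℂ)
    (B : Fin n → Matrix (Fin (n + 2)) (Fin (n + 2)) ℂ)
    (hA : ∀ i, (A i).PosSemidef) (hB : ∀ i, (B i).PosSemidef) :
    0 ≤ (Matrix.of fun i j : Fin r =>
        (mixedDisc (Fin.cons (A 0) (Fin.cons (A i.succ) B))).re *
            (mixedDisc (Fin.cons (A 0) (Fin.cons (A j.succ) B))).re -
          (mixedDisc (Fin.cons (A 0) (Fin.cons (A 0) B))).re *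
            (mixedDisc (Fin.cons (A i.succ) (Fin.cons (A j.succ) B))).re).det ∧
      0 ≤ (-1 : ℝ) ^ r * (Matrix.of fun i j : Fin (r + 1) =>
        (mixedDisc (Fin.cons (A i) (Fin.cons (A j) B))).re).det := by
  let A' : ℝ → Fin (r + 1) → Matrix (Fin (n + 2)) (Fin (n + 2)) ℂ := fun ε i => A i + (ε : ℂ) • 1
  let B' : ℝ → Fin n → Matrix (Fin (n + 2)) (Fin (n + 2)) ℂ := fun ε i => B i + (ε : ℂ) • 1
  have hpd {M : Matrix (Fin (n + 2)) (Fin (n + 2)) ℂ} (hM : M.PosSemidef) {ε : ℝ} (hε : 0 < ε) :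
      (M + (ε : ℂ) • 1).PosDef :=
    PosDef.posSemidef_add hM (PosDef.one.smul (by exact_mod_cast hε))
  have key (ε : ℝ) (hε : 0 < ε) := af_det_nonneg_of_posDef (A := A' ε) (B := B' ε)
    (fun i => hpd (hA i) hε) fun i => hpd (hB i) hε
  have hc (i j : Fin (r + 1)) : Continuous fun ε => mixedDiscBilin (B' ε) (A' ε i) (A' ε j) := by
    simp only [mixedDiscBilin_apply, A', B']
    refine Complex.continuous_re.comp ((continuous_mixedDisc _).comp (continuous_pi fun k => ?_))
    refine Fin.cases ?_ (Fin.cases ?_ fun k => ?_) k <;> simp only [Fin.cons_zero, Fin.cons_succ] <;>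
      fun_prop
  have hA0 : A' 0 = A := by simp [A']
  have hB0 : B' 0 = B := by simp [B']
  have lim {f : ℝ → ℝ} (hf : Continuous f) (hpos : ∀ ε, 0 < ε → 0 ≤ f ε) : 0 ≤ f 0 :=
    ge_of_tendsto (hf.continuousWithinAt (s := Set.Ioi 0) (x := 0)).tendsto
      (Filter.eventually_of_mem self_mem_nhdsWithin hpos)
  constructor
  · have h := lim (f := fun ε => (of fun i j : Fin r =>
        mixedDiscBilin (B' ε) (A' ε 0) (A' ε i.succ) * mixedDiscBilin (B' ε) (A' ε 0) (A' ε j.succ) -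
          mixedDiscBilin (B' ε) (A' ε 0) (A' ε 0) *
            mixedDiscBilin (B' ε) (A' ε i.succ) (A' ε j.succ)).det)
      (Continuous.matrix_det (continuous_matrix fun i j =>
        ((hc 0 i.succ).mul (hc 0 j.succ)).sub ((hc 0 0).mul (hc i.succ j.succ))))
      fun ε hε => (key ε hε).1
    rw [hA0, hB0] at h
    exact h
  · have h := lim (f := fun ε => (-1 : ℝ) ^ r *
        (of fun i j => mixedDiscBilin (B' ε) (A' ε i) (A' ε j)).det)
      (continuous_const.mul (Continuous.matrix_det (continuous_matrix hc)))
      fun ε hε => (key ε hε).2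
    rw [hA0, hB0] at h
    exact h
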